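/- For every integer n ≥ 1, Σ_k k · D_{n,k} = (n−1)! · Σ_{m=1}^{n−1} (m² / m!) · d_{m−1}, where D_{n,k} is the number of derangements of {1,…,n} with exactly k descents and d_m is the number of derangements of {1,…,m} (with d_0 = 1). Equivalently, the expected number of descents of a uniformly random derangement of S_n equals ((n−1)!/d_n) · Σ_{m=1}^{n−1} (m²/m!) · d_{m−1}. -/

import Mathlib

open Finset

/-- The number of descents of a permutation of `Fin n`:
positions `i` with `i+1 < n` and `π(i) > π(i+1)`. -/
def descents {n : ℕ} (π : Equiv.Perm (Fin n)) : ℕ :=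
  (Finset.univ.filter fun i : Fin n =>
    ∃ h : (i : ℕ) + 1 < n, π ⟨(i : ℕ) + 1, h⟩ < π i).card

/-- The derangements of the symmetric group `S_n`. -/
def derangementSet (n : ℕ) : Finset (Equiv.Perm (Fin n)) :=
  Finset.univ.filter fun π => ∀ i, π i ≠ i

/-- `D_{n,k}`: the number of derangements of `{1,…,n}` with exactly `k` descents. -/
def derDesNat (n k : ℕ) : ℕ :=
  ((derangementSet n).filter fun π => descents π = k).card

/-!
Fix adjacent positions `i ⋖ j`. There is an involution on derangements that exchanges the two
alternatives `π j < π i` and `π i < π j`, except that it fixes each derangement with `π i = j` and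
`π j = i`; those all have `π j < π i`, and there are `d_{n-2}` of them. Hence `(d_n + d_{n-2}) / 2`
derangements descend at each of the `n - 1` positions. The recurrence for `d_n` turns the resulting
total `S_n = (n - 1) (d_n + d_{n-2}) / 2` into `S_{n+1} = n S_n + n ^ 2 d_{n-1}`, and dividing by
`n!` makes the sum telescope.
-/

section Derangements

open Equiv Equiv.Perm
open Function (fixedPoints IsFixedPt)

variable {α : Type*}

section Counting

variable [Fintype α] [DecidableEq α]

lemma card_toFinset_derangements :
    #(derangements α).toFinset = numDerangements (Fintype.card α) := by
  rw [Set.toFinset_card, card_derangements_eq_numDerangements]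

lemma mem_derangements_and_eqOn_support_iff (σ π : Perm α) :
    (π ∈ derangements α ∧ ∀ x ∈ σ.support, π x = σ x) ↔
      ∀ x, x ∈ σ.support ↔ x ∈ fixedPoints (π * σ⁻¹) := by
  have pointwise_iff : ∀ x, (π x ≠ x ∧ (σ x ≠ x → π x = σ x)) ↔ (σ x ≠ x ↔ π x = σ x) := by
    grind
  calc (π ∈ derangements α ∧ ∀ x ∈ σ.support, π x = σ x)
    _ ↔ ∀ x, π x ≠ x ∧ (σ x ≠ x → π x = σ x) := by
      simp only [forall_and, mem_support]
      rfl
    _ ↔ ∀ x, σ x ∈ σ.support ↔ σ x ∈ fixedPoints (π * σ⁻¹) := by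
      simp [pointwise_iff, IsFixedPt]
    _ ↔ ∀ x, x ∈ σ.support ↔ x ∈ fixedPoints (π * σ⁻¹) :=
      Iff.symm <| σ.surjective.forall

lemma card_derangements_eqOn_support (σ : Perm α) :
    #{π ∈ (derangements α).toFinset | ∀ x ∈ σ.support, π x = σ x} =
      numDerangements (Fintype.card α - #σ.support) := by
  have card_compl_support :
      Fintype.card {x // x ∉ σ.support} = Fintype.card α - #σ.support := by
    rw [Fintype.card_subtype_compl, Fintype.card_coe]
  rw [← card_compl_support, ← card_derangements_eq_numDerangements,
    Fintype.card_congr (derangements.subtypeEquiv fun x => x ∉ σ.support), ← Fintype.card_coe]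
  refine Fintype.card_congr ((Equiv.mulRight σ⁻¹).subtypeEquiv fun π => ?_)
  rw [mem_filter, Set.mem_toFinset, mem_derangements_and_eqOn_support_iff]
  simp only [not_not, Equiv.coe_mulRight]

lemma card_derangements_exchanging {i j : α} (hij : i ≠ j) :
    #{π ∈ (derangements α).toFinset | π i = j ∧ π j = i} =
      numDerangements (Fintype.card α - 2) := by
  rw [← card_support_swap hij, ← card_derangements_eqOn_support]
  simp [support_swap hij]

end Counting

section Flip

variable [DecidableEq α] {i j : α} {π : Perm α}

/-- The involution on derangements which, for adjacent `i` and `j`, reverses the order of the values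
at `i` and `j` unless they are `j` and `i`. Composing with `swap i j` would create a fixed point
when `π i = j` or `π j = i`; conjugating by it is the remedy in that case. -/
def derangementFlip (i j : α) (π : Perm α) : Perm α :=
  if π i = j ∨ π j = i then swap i j * π * swap i j else π * swap i j

lemma derangementFlip_of_exchanging (hi : π i = j) (hj : π j = i) :
    derangementFlip i j π = π := by
  rw [derangementFlip, if_pos (Or.inl hi), mul_assoc, mul_swap_eq_swap_mul, hi, hj, swap_comm j i,
    swap_mul_self_mul]

lemma derangementFlip_mem_derangements (hπ : π ∈ derangements α) :
    derangementFlip i j π ∈ derangements α := by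
  intro x
  rw [derangementFlip]
  split_ifs with h
  · rw [mul_apply, mul_apply, Ne, swap_apply_eq_iff]
    exact hπ (swap i j x)
  · push Not at h
    rw [mul_apply]
    rcases eq_or_ne x i with rfl | hxi
    · rw [swap_apply_left]
      exact h.2
    rcases eq_or_ne x j with rfl | hxj
    · rw [swap_apply_right]
      exact h.1
    rw [swap_apply_of_ne_of_ne hxi hxj]
    exact hπ x

lemma derangementFlip_derangementFlip (hπ : π ∈ derangements α) :
    derangementFlip i j (derangementFlip i j π) = π := by
  by_cases h : π i = j ∨ π j = i
  · have h_conj : (swap i j * π * swap i j) i = j ∨ (swap i j * π * swap i j) j = i := by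
      simpa [swap_apply_eq_iff] using h.symm
    rw [derangementFlip, derangementFlip, if_pos h, if_pos h_conj]
    simp [mul_assoc]
  · have h_mul : ¬ ((π * swap i j) i = j ∨ (π * swap i j) j = i) := by
      simp [hπ i, hπ j]
    rw [derangementFlip, derangementFlip, if_neg h, if_neg h_mul, mul_swap_mul_self]

lemma derangementFlip_exchanging_iff (hπ : π ∈ derangements α) :
    (derangementFlip i j π i = j ∧ derangementFlip i j π j = i) ↔ (π i = j ∧ π j = i) := by
  constructor
  · rintro ⟨hi, hj⟩
    have h_eq : π = derangementFlip i j π := by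
      rw [← derangementFlip_of_exchanging hi hj, derangementFlip_derangementFlip hπ]
    rw [h_eq]
    exact ⟨hi, hj⟩
  · rintro ⟨hi, hj⟩
    rw [derangementFlip_of_exchanging hi hj]
    exact ⟨hi, hj⟩

end Flip

section Descent

lemma apply_lt_apply_of_exchanging [LT α] {i j : α} (hij : i < j) {π : Perm α}
    (h : π i = j ∧ π j = i) : π j < π i := by
  rwa [h.1, h.2]

variable [LinearOrder α] {i j : α}

lemma swap_lt_swap_iff_of_covBy (hij : i ⋖ j) {a b : α} (h : ¬ (a = i ∧ b = j))
    (h' : ¬ (a = j ∧ b = i)) : swap i j a < swap i j b ↔ a < b := by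
  have lt_right_iff : ∀ c, c ≠ i → (c < j ↔ c < i) := fun c hc =>
    ⟨fun h => (hij.le_of_lt h).lt_of_ne hc, fun h => h.trans hij.lt⟩
  have left_lt_iff : ∀ c, c ≠ j → (i < c ↔ j < c) := fun c hc =>
    ⟨fun h => (hij.ge_of_gt h).lt_of_ne hc.symm, fun h => hij.lt.trans h⟩
  simp only [swap_apply_def]
  split_ifs <;> grind

lemma derangementFlip_lt_iff (hij : i ⋖ j) {π : Perm α} (hπ : π ∈ derangements α)
    (h : ¬ (π i = j ∧ π j = i)) :
    derangementFlip i j π j < derangementFlip i j π i ↔ π i < π j := by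
  rw [derangementFlip]
  split_ifs
  · simp only [mul_apply, swap_apply_left, swap_apply_right]
    exact swap_lt_swap_iff_of_covBy hij (fun h_fix => hπ i h_fix.1) h
  · simp only [mul_apply, swap_apply_left, swap_apply_right]

variable [Fintype α]

lemma card_derangements_descent_not_exchanging (hij : i ⋖ j) :
    #{π ∈ (derangements α).toFinset | π j < π i ∧ ¬ (π i = j ∧ π j = i)} =
      #{π ∈ (derangements α).toFinset | ¬ π j < π i} := by
  apply card_nbij' (derangementFlip i j) (derangementFlip i j)
  all_goals
    intro π hπ
    simp only [coe_filter, Set.mem_toFinset, Set.mem_ofPred_eq] at hπ ⊢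
  · obtain ⟨hπ, h_desc, h_exch⟩ := hπ
    refine ⟨derangementFlip_mem_derangements hπ, ?_⟩
    rw [derangementFlip_lt_iff hij hπ h_exch]
    exact h_desc.not_gt
  · obtain ⟨hπ, h_asc⟩ := hπ
    have h_exch : ¬ (π i = j ∧ π j = i) := mt (apply_lt_apply_of_exchanging hij.lt) h_asc
    refine ⟨derangementFlip_mem_derangements hπ, ?_, ?_⟩
    · rw [derangementFlip_lt_iff hij hπ h_exch]
      exact (not_lt.1 h_asc).lt_of_ne (π.injective.ne hij.ne)
    · rw [derangementFlip_exchanging_iff hπ]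
      exact h_exch
  · exact derangementFlip_derangementFlip hπ.1
  · exact derangementFlip_derangementFlip hπ.1

lemma two_mul_card_derangements_descent (hij : i ⋖ j) :
    2 * #{π ∈ (derangements α).toFinset | π j < π i} =
      numDerangements (Fintype.card α) + numDerangements (Fintype.card α - 2) := by
  have exchanging_descent : #{π ∈ (derangements α).toFinset | π j < π i ∧ π i = j ∧ π j = i} =
      numDerangements (Fintype.card α - 2) := by
    rw [← card_derangements_exchanging hij.ne]
    congr 1
    exact filter_congr fun π _ => and_iff_right_of_imp (apply_lt_apply_of_exchanging hij.lt)
  have descent_or_not := card_filter_add_card_filter_not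
    (s := (derangements α).toFinset) fun π => π j < π i
  have exchanging_or_not := card_filter_add_card_filter_not
    (s := {π ∈ (derangements α).toFinset | π j < π i}) fun π => π i = j ∧ π j = i
  rw [filter_filter, filter_filter, exchanging_descent,
    card_derangements_descent_not_exchanging hij] at exchanging_or_not
  rw [card_toFinset_derangements] at descent_or_not
  lia

end Descent

end Derangements

lemma derangementSet_eq_toFinset (n : ℕ) :
    derangementSet n = (derangements (Fin n)).toFinset := by
  ext π
  rw [Set.mem_toFinset, derangementSet, mem_filter_univ]
  rfl

lemma card_derangementSet (n : ℕ) : #(derangementSet n) = numDerangements n := by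
  rw [derangementSet_eq_toFinset, card_toFinset_derangements, Fintype.card_fin]

lemma descents_eq_card_filter_succ_lt {m : ℕ} (π : Equiv.Perm (Fin (m + 1))) :
    descents π = #{i : Fin m | π i.succ < π i.castSucc} := by
  rw [descents, card_filter, card_filter, Fin.sum_univ_castSucc]
  simp [Fin.succ]

lemma sum_mul_derDesNat_eq_sum_descents (m : ℕ) :
    ∑ k ∈ range (m + 1), k * derDesNat (m + 1) k = ∑ π ∈ derangementSet (m + 1), descents π := by
  have descents_mem_range : ∀ π ∈ derangementSet (m + 1), descents π ∈ range (m + 1) := by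
    intro π _
    rw [mem_range, Nat.lt_succ_iff, descents_eq_card_filter_succ_lt]
    exact (card_le_univ _).trans_eq (Fintype.card_fin m)
  rw [← sum_fiberwise_of_maps_to' descents_mem_range fun k => k]
  simp only [sum_const, smul_eq_mul, derDesNat, mul_comm]

-- For `m = 0` the factor `m` hides the truncation of `m - 1`.
lemma two_mul_sum_mul_derDesNat (m : ℕ) :
    2 * ∑ k ∈ range (m + 1), k * derDesNat (m + 1) k =
      m * (numDerangements (m + 1) + numDerangements (m - 1)) := by
  calc 2 * ∑ k ∈ range (m + 1), k * derDesNat (m + 1) k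
    _ = 2 * ∑ π ∈ derangementSet (m + 1), #{i : Fin m | π i.succ < π i.castSucc} := by
      simp only [sum_mul_derDesNat_eq_sum_descents, descents_eq_card_filter_succ_lt]
    _ = ∑ i : Fin m, 2 * #{π ∈ derangementSet (m + 1) | π i.succ < π i.castSucc} := by
      rw [← mul_sum]
      congr 1
      exact sum_card_bipartiteAbove_eq_sum_card_bipartiteBelow _
    _ = ∑ _i : Fin m, (numDerangements (m + 1) + numDerangements (m - 1)) := by
      refine sum_congr rfl fun i _ => ?_
      have adjacent : i.castSucc ⋖ i.succ := by simp
      rw [derangementSet_eq_toFinset, two_mul_card_derangements_descent adjacent, Fintype.card_fin]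
      rfl
    _ = m * (numDerangements (m + 1) + numDerangements (m - 1)) := by
      rw [sum_const, card_univ, Fintype.card_fin, smul_eq_mul]

lemma sum_mul_derDesNat_succ (m : ℕ) :
    ∑ k ∈ range (m + 2), k * derDesNat (m + 2) k =
      (m + 1) * ∑ k ∈ range (m + 1), k * derDesNat (m + 1) k +
        (m + 1) ^ 2 * numDerangements m := by
  refine Nat.eq_of_mul_eq_mul_left two_pos ?_
  rw [two_mul_sum_mul_derDesNat (m + 1), mul_add 2, mul_left_comm, two_mul_sum_mul_derDesNat m,
    Nat.add_sub_cancel]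
  cases m with
  | zero => simp [numDerangements]
  | succ m =>
    simp only [numDerangements_add_two, Nat.add_sub_cancel]
    ring

lemma eq_factorial_mul_sum_div_of_succ {K : Type*} [Field K] [CharZero K] {a c : ℕ → K}
    (h : ∀ m, a (m + 1) = (m + 1) * a m + c (m + 1)) (m : ℕ) :
    a m = m.factorial * (a 0 + ∑ k ∈ Icc 1 m, c k / k.factorial) := by
  induction m with
  | zero => simp
  | succ m ih =>
    have h_factorial : ((m + 1).factorial : K) ≠ 0 := Nat.cast_ne_zero.2 (m + 1).factorial_ne_zero
    rw [h, ih, sum_Icc_succ_top (Nat.le_add_left 1 m), ← add_assoc, mul_add _ _ (c _ / _),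
      mul_div_cancel₀ _ h_factorial, Nat.factorial_succ]
    push_cast
    ring

/-- `Σ_k k·D_{n,k} = (n-1)! · Σ_{m=1}^{n-1} (m²/m!)·d_{m-1}`. -/
theorem sum_descents_derangements_formula (n : ℕ) (hn : 1 ≤ n) :
    ((∑ k ∈ Finset.range n, k * derDesNat n k : ℕ) : ℝ) =
      (Nat.factorial (n - 1) : ℝ) *
        ∑ m ∈ Finset.Icc 1 (n - 1),
          ((m : ℝ) ^ 2 / (Nat.factorial m : ℝ)) * ((derangementSet (m - 1)).card : ℝ) := by
  obtain ⟨m, rfl⟩ : ∃ m, n = m + 1 := Nat.exists_eq_add_of_le' hn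
  have solved := eq_factorial_mul_sum_div_of_succ (K := ℝ)
    (a := fun m => (∑ k ∈ range (m + 1), k * derDesNat (m + 1) k : ℕ))
    (c := fun m => (m : ℝ) ^ 2 * #(derangementSet (m - 1)))
    (fun m => by
      rw [card_derangementSet, sum_mul_derDesNat_succ]
      push_cast
      rfl) m
  simpa [div_mul_eq_mul_div] using solved
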